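/- For p ∈ [1,∞), a subset F ⊂ L^p(ℝ^d) is totally bounded if and only if: (i) F is bounded; (ii) for every ε > 0 there exists R > 0 with ∫_{|x|>R} |f(x)|^p dx < ε^p for all f ∈ F; and (iii) for every ε > 0 there exists δ > 0 such that ∫_{ℝ^d} |f(x+y) − f(x)|^p dx < ε^p for all f ∈ F and all |y| < δ. -/

import Mathlib

open MeasureTheory

noncomputable section

section
open Filter Topology

lemma kr_int_lt_iff {α : Type*} [MeasurableSpace α] {μ : Measure α} {p : ℝ} (hp : 1 ≤ p)
    {g : α → ℝ} (hg : MemLp g (ENNReal.ofReal p) μ) {ε : ℝ} (hε : 0 < ε) :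
    (∫ x, |g x| ^ p ∂μ) < ε ^ p ↔ eLpNorm g (ENNReal.ofReal p) μ < ENNReal.ofReal ε := by
  have hp0 : 0 < p := by linarith
  rw [hg.eLpNorm_eq_integral_rpow_norm (by simpa using hp0) ENNReal.ofReal_ne_top,
    ENNReal.toReal_ofReal hp0.le, ENNReal.ofReal_lt_ofReal_iff hε]
  have h0 : 0 ≤ ∫ x, |g x| ^ p ∂μ := integral_nonneg fun x => by positivity
  exact (Real.rpow_inv_lt_iff_of_pos h0 hε.le hp0).symm

lemma kr_pow {α : Type*} [MeasurableSpace α] {μ : Measure α} {p : ℝ} (hp : 1 ≤ p)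
    (g : α → ℝ) :
    eLpNorm g (ENNReal.ofReal p) μ ^ p = ∫⁻ x, ‖g x‖ₑ ^ p ∂μ := by
  have hp0 : 0 < p := by linarith
  rw [eLpNorm_eq_eLpNorm' (by simpa using hp0) ENNReal.ofReal_ne_top,
    ENNReal.toReal_ofReal hp0.le, ← lintegral_rpow_enorm_eq_rpow_eLpNorm' hp0]

lemma kr_jensen {α : Type*} [MeasurableSpace α] {μ : Measure α} [IsProbabilityMeasure μ]
    {p : ℝ} (hp : 1 ≤ p) {g : α → ℝ} (hg : AEStronglyMeasurable g μ) :
    ‖∫ x, g x ∂μ‖ₑ ^ p ≤ ∫⁻ x, ‖g x‖ₑ ^ p ∂μ := by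
  rw [← kr_pow hp]
  gcongr
  calc _ ≤ ∫⁻ x, ‖g x‖ₑ ∂μ := enorm_integral_le_lintegral_enorm _
    _ = eLpNorm g 1 μ := eLpNorm_one_eq_lintegral_enorm.symm
    _ ≤ _ := eLpNorm_le_eLpNorm_of_exponent_le (by simpa using hp) hg

lemma kr_tail {d : ℕ} {q : ENNReal} (hq : q ≠ ⊤)
    {f : EuclideanSpace ℝ (Fin d) → ℝ} (hf : MemLp f q volume) {ε : ENNReal} (hε : 0 < ε) :
    ∀ᶠ R : ℝ in atTop, eLpNorm f q (volume.restrict {x | R < ‖x‖}) ≤ ε := by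
  obtain ⟨g, hgc, hg, -, -⟩ := hf.exists_hasCompactSupport_eLpNorm_sub_le hq hε.ne'
  obtain ⟨R₀, hR₀⟩ := hgc.isCompact.isBounded.subset_closedBall 0
  filter_upwards [eventually_ge_atTop R₀] with R hR
  refine le_trans ?_ hg
  refine le_trans (le_of_eq ?_) (eLpNorm_mono_measure (f - g)
    (Measure.restrict_le_self (s := {x | R < ‖x‖})))
  refine eLpNorm_congr_ae ?_
  filter_upwards [ae_restrict_mem (measurableSet_lt measurable_const measurable_norm)] with x hx
  have : g x = 0 := by
    by_contra h
    have := hR₀ (subset_tsupport g h)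
    simp at this hx
    linarith
  simp [this]

lemma kr_forward {d : ℕ} (p : ℝ) (hp : 1 ≤ p)
    [Fact (1 ≤ ENNReal.ofReal p)]
    (F : Set (Lp ℝ (ENNReal.ofReal p) (volume : Measure (EuclideanSpace ℝ (Fin d)))))
    (hF : TotallyBounded F) :
      (Bornology.IsBounded F ∧
       (∀ ε > 0, ∃ R > 0, ∀ f ∈ F,
          (∫ x in {x : EuclideanSpace ℝ (Fin d) | R < ‖x‖},
            |(f : EuclideanSpace ℝ (Fin d) → ℝ) x| ^ p) < ε ^ p) ∧
       (∀ ε > 0, ∃ δ > 0, ∀ f ∈ F, ∀ y : EuclideanSpace ℝ (Fin d), ‖y‖ < δ →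
          (∫ x, |(f : EuclideanSpace ℝ (Fin d) → ℝ) (x + y) -
                 (f : EuclideanSpace ℝ (Fin d) → ℝ) x| ^ p) < ε ^ p)) := by
  refine ⟨hF.isBounded, ?_, ?_⟩
  · intro ε hε
    obtain ⟨t, ht, hFt⟩ := Metric.totallyBounded_iff.1 hF (ε / 2) (by positivity)
    have := (ht.eventually_all (l := atTop)).2 fun g (_ : g ∈ t) =>
      kr_tail ENNReal.ofReal_ne_top (Lp.memLp g) (ε := ENNReal.ofReal (ε / 2)) (by simpa using hε)
    obtain ⟨R, hR, hR0⟩ := (this.and (eventually_gt_atTop 0)).exists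
    refine ⟨R, hR0, fun f hf => ?_⟩
    obtain ⟨g, hg, hfg⟩ := Set.mem_iUnion₂.1 (hFt hf)
    rw [kr_int_lt_iff hp ((Lp.memLp f).restrict _) hε]
    set ν := (volume : Measure (EuclideanSpace ℝ (Fin d))).restrict {x | R < ‖x‖}
    have hf1 := (Lp.memLp f).restrict {x | R < ‖x‖}
    have hg1 := (Lp.memLp g).restrict {x | R < ‖x‖}
    have hd : eLpNorm (⇑f - ⇑g) (ENNReal.ofReal p) volume < ENNReal.ofReal (ε / 2) := by
      rw [← Lp.edist_def, edist_dist]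
      exact (ENNReal.ofReal_lt_ofReal_iff (by positivity)).2 hfg
    have hgR := hR g hg
    generalize (f : EuclideanSpace ℝ (Fin d) → ℝ) = f at *
    generalize (g : EuclideanSpace ℝ (Fin d) → ℝ) = g at *
    calc eLpNorm f (ENNReal.ofReal p) ν = eLpNorm ((f - g) + g) (ENNReal.ofReal p) ν := by
          simp
      _ ≤ eLpNorm (f - g) (ENNReal.ofReal p) ν + eLpNorm g (ENNReal.ofReal p) ν :=
          eLpNorm_add_le (hf1.sub hg1).1 hg1.1 Fact.out
      _ < ENNReal.ofReal (ε / 2) + ENNReal.ofReal (ε / 2) := by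
          refine ENNReal.add_lt_add_of_lt_of_le hg1.2.ne ?_ hgR
          exact lt_of_le_of_lt (eLpNorm_mono_measure _ Measure.restrict_le_self) hd
      _ = ENNReal.ofReal ε := by
          rw [← ENNReal.ofReal_add (by positivity) (by positivity)]; simp
  · intro ε hε
    obtain ⟨t, ht, hFt⟩ := Metric.totallyBounded_iff.1 hF (ε / 3) (by positivity)
    have : Fact (ENNReal.ofReal p ≠ ⊤) := ⟨ENNReal.ofReal_ne_top⟩
    have := (ht.eventually_all (l := 𝓝 (0 : EuclideanSpace ℝ (Fin d)))).2 fun g (_ : g ∈ t) => by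
      have hc : Continuous fun y : EuclideanSpace ℝ (Fin d) => (DomAddAct.mk y) +ᵥ g := by
        have : Continuous (DomAddAct.mk : EuclideanSpace ℝ (Fin d) → _) :=
          DomAddAct.continuous_mk
        fun_prop
      have := Metric.tendsto_nhds.1 (hc.tendsto 0) (ε / 3) (by positivity)
      simpa using this
    obtain ⟨δ, hδ, h⟩ := Metric.eventually_nhds_iff.1 this
    refine ⟨δ, hδ, fun f hf y hy => ?_⟩
    obtain ⟨g, hg, hfg⟩ := Set.mem_iUnion₂.1 (hFt hf)
    have h1 := h (y := y) (by simpa using hy) g hg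
    have h2 : dist (DomAddAct.mk y +ᵥ f) f < ε := by
      have h3 : dist (DomAddAct.mk y +ᵥ f) (DomAddAct.mk y +ᵥ g) = dist f g :=
        dist_vadd _ _ _
      have h4 := dist_triangle4 (DomAddAct.mk y +ᵥ f) (DomAddAct.mk y +ᵥ g) g f
      rw [Metric.mem_ball] at hfg
      rw [dist_comm g f] at h4
      linarith
    have hmp : MeasurePreserving (fun x : EuclideanSpace ℝ (Fin d) => x + y) volume volume :=
      measurePreserving_add_right _ _
    rw [kr_int_lt_iff hp (g := fun x => f (x + y) - f x)
      (((Lp.memLp f).comp_measurePreserving hmp).sub (Lp.memLp f)) hε]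
    rw [← ENNReal.ofReal_lt_ofReal_iff hε, ← edist_dist, Lp.edist_def] at h2
    convert h2 using 1
    refine eLpNorm_congr_ae ?_
    filter_upwards [DomAddAct.vadd_Lp_ae_eq (DomAddAct.mk y) f] with x hx
    rw [Pi.sub_apply, hx]
    simp [add_comm]

/-- index of the cube of side `h` containing `x` -/
def krCell {d : ℕ} (h : ℝ) (x : EuclideanSpace ℝ (Fin d)) : Fin d → ℤ := fun i => ⌊x i / h⌋

lemma krCell_measurable {d : ℕ} (h : ℝ) : Measurable (krCell (d := d) h) := by
  unfold krCell
  refine measurable_pi_lambda _ fun i => ?_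
  exact Int.measurable_floor.comp (by fun_prop)

lemma krCell_vol {d : ℕ} {h : ℝ} (hh : 0 < h) (k : Fin d → ℤ) :
    volume (krCell h ⁻¹' {k}) = ENNReal.ofReal h ^ d := by
  have : krCell h ⁻¹' {k} = (@WithLp.ofLp 2 (Fin d → ℝ)) ⁻¹'
      (Set.pi Set.univ fun i => Set.Ico (h * k i) (h * k i + h)) := by
    ext x
    simp only [krCell, Set.mem_preimage, Set.mem_singleton_iff, funext_iff, Set.mem_pi,
      Set.mem_univ, true_imp_iff, Set.mem_Ico, Int.floor_eq_iff, le_div_iff₀ hh, div_lt_iff₀ hh]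
    refine forall_congr' fun i => ?_
    rw [mul_comm h, add_mul, one_mul]
  rw [this, (PiLp.volume_preserving_ofLp (Fin d)).measure_preimage
    (MeasurableSet.univ_pi fun i => measurableSet_Ico).nullMeasurableSet, Real.volume_pi_Ico]
  simp

/-- open sup-norm cube -/
def krW (d : ℕ) (h : ℝ) : Set (EuclideanSpace ℝ (Fin d)) := {y | ∀ i, |y i| < h}

lemma krW_eq (d : ℕ) (h : ℝ) : krW d h = (@WithLp.ofLp 2 (Fin d → ℝ)) ⁻¹'
      (Set.pi Set.univ fun i => Set.Ioo (-h) h) := by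
  ext x
  simp [krW, abs_lt]

lemma krW_meas (d : ℕ) (h : ℝ) : MeasurableSet (krW d h) := by
  rw [krW_eq]
  exact (PiLp.volume_preserving_ofLp (Fin d)).measurable
    (MeasurableSet.univ_pi fun i => measurableSet_Ioo)

lemma krW_vol (d : ℕ) (h : ℝ) :
    volume (krW d h) = 2 ^ d * ENNReal.ofReal h ^ d := by
  rw [krW_eq, (PiLp.volume_preserving_ofLp (Fin d)).measure_preimage
    (MeasurableSet.univ_pi fun i => measurableSet_Ioo).nullMeasurableSet, Real.volume_pi_Ioo]
  simp only [sub_neg_eq_add, Finset.prod_const, Finset.card_univ, Fintype.card_fin]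
  rw [← mul_pow, ← two_mul, ENNReal.ofReal_mul (by norm_num)]
  simp

lemma krW_small (d : ℕ) {δ : ℝ} (hδ : 0 < δ) : ∃ h > 0, ∀ y ∈ krW d h, ‖y‖ < δ := by
  have hc : Continuous (@WithLp.toLp 2 (Fin d → ℝ)) := PiLp.continuous_toLp 2 _
  obtain ⟨h, hh, H⟩ := Metric.continuous_iff.1 hc 0 δ hδ
  refine ⟨h, hh, fun y hy => ?_⟩
  have := H (WithLp.ofLp y) (by
    rw [dist_zero_right, pi_norm_lt_iff hh]
    exact hy)
  simpa using this

/-- mean over a cell -/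
def krMean {d : ℕ} (h : ℝ) (f : EuclideanSpace ℝ (Fin d) → ℝ) (k : Fin d → ℤ) : ℝ :=
  ∫ z, f z ∂(ProbabilityTheory.cond volume (krCell h ⁻¹' {k}))

lemma krCell_prob {d : ℕ} {h : ℝ} (hh : 0 < h) (k : Fin d → ℤ) :
    IsProbabilityMeasure (ProbabilityTheory.cond
      (volume : Measure (EuclideanSpace ℝ (Fin d))) (krCell h ⁻¹' {k})) := by
  refine ProbabilityTheory.cond_isProbabilityMeasure_of_finite ?_ ?_ <;> rw [krCell_vol hh]
  · exact pow_ne_zero _ (by simpa using hh)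
  · exact ENNReal.pow_ne_top ENNReal.ofReal_ne_top

lemma krMean_bound {d : ℕ} {p : ℝ} (hp : 1 ≤ p) {h : ℝ} (hh : 0 < h)
    {f : EuclideanSpace ℝ (Fin d) → ℝ} (hf : StronglyMeasurable f) (k : Fin d → ℤ) :
    ‖krMean h f k‖ₑ ^ p ≤ (ENNReal.ofReal h ^ d)⁻¹ * eLpNorm f (ENNReal.ofReal p) volume ^ p := by
  have := krCell_prob hh k
  refine (kr_jensen hp hf.aestronglyMeasurable).trans ?_
  rw [ProbabilityTheory.cond, lintegral_smul_measure, krCell_vol hh, kr_pow hp, smul_eq_mul]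
  gcongr
  exact Measure.restrict_le_self

lemma krMean_core {d : ℕ} {p : ℝ} (hp : 1 ≤ p) {h : ℝ} (hh : 0 < h)
    {f : EuclideanSpace ℝ (Fin d) → ℝ} (hf : StronglyMeasurable f)
    (hfp : MemLp f (ENNReal.ofReal p) volume) {η : ENNReal}
    (hη : ∀ y ∈ krW d h, ∫⁻ x, ‖f (x + y) - f x‖ₑ ^ p ≤ η) :
    ∫⁻ x, ‖f x - krMean h f (krCell h x)‖ₑ ^ p ≤ 2 ^ d * η := by
  set c := ENNReal.ofReal h ^ d with hc
  have hc0 : c ≠ 0 := pow_ne_zero _ (by simpa using hh)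
  have hct : c ≠ ⊤ := ENNReal.pow_ne_top ENNReal.ofReal_ne_top
  have hfm : Measurable f := hf.measurable
  have key : ∀ x, ‖f x - krMean h f (krCell h x)‖ₑ ^ p ≤
      c⁻¹ * ∫⁻ y in krW d h, ‖f (x + y) - f x‖ₑ ^ p := by
    intro x
    have := krCell_prob hh (krCell h x)
    have hQ : MeasurableSet (krCell h ⁻¹' {krCell h x} : Set (EuclideanSpace ℝ (Fin d))) :=
      krCell_measurable h (measurableSet_singleton _)
    have hint : Integrable f (ProbabilityTheory.cond volume (krCell h ⁻¹' {krCell h x})) := by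
      refine MemLp.integrable (q := ENNReal.ofReal p) (by simpa using hp) ?_
      unfold ProbabilityTheory.cond
      refine (hfp.restrict _).smul_measure ?_
      rw [krCell_vol hh]
      exact ENNReal.inv_ne_top.2 hc0
    have h1 : f x - krMean h f (krCell h x) =
        ∫ z, (f x - f z) ∂(ProbabilityTheory.cond volume (krCell h ⁻¹' {krCell h x})) := by
      rw [integral_sub (integrable_const _) hint]
      simp [krMean]
    rw [h1]
    refine (kr_jensen hp (by fun_prop)).trans ?_
    rw [ProbabilityTheory.cond, lintegral_smul_measure, krCell_vol hh, smul_eq_mul]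
    refine mul_le_mul_right ?_ _
    rw [← lintegral_indicator hQ, ← lintegral_indicator (krW_meas d h),
      ← lintegral_add_left_eq_self _ x]
    refine lintegral_mono fun y => ?_
    by_cases hy : x + y ∈ (krCell h ⁻¹' {krCell h x} : Set (EuclideanSpace ℝ (Fin d)))
    · have hyW : y ∈ krW d h := by
        intro i
        have hi : ⌊(x + y) i / h⌋ = ⌊x i / h⌋ := congrFun hy i
        have := Int.abs_sub_lt_one_of_floor_eq_floor hi
        rw [← sub_div, abs_div, abs_of_pos hh, div_lt_one hh] at this
        simpa using this
      rw [Set.indicator_of_mem hy, Set.indicator_of_mem hyW, ← enorm_neg, neg_sub]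
    · rw [Set.indicator_of_notMem hy]
      exact zero_le
  calc _ ≤ ∫⁻ x, c⁻¹ * ∫⁻ y in krW d h, ‖f (x + y) - f x‖ₑ ^ p := lintegral_mono key
    _ = c⁻¹ * ∫⁻ x, ∫⁻ y in krW d h, ‖f (x + y) - f x‖ₑ ^ p :=
        lintegral_const_mul' _ _ (ENNReal.inv_ne_top.2 hc0)
    _ = c⁻¹ * ∫⁻ y in krW d h, ∫⁻ x, ‖f (x + y) - f x‖ₑ ^ p := by
        rw [lintegral_lintegral_swap]
        refine Measurable.aemeasurable ?_
        unfold Function.uncurry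
        fun_prop
    _ ≤ c⁻¹ * ∫⁻ y in krW d h, η := by
        gcongr 1
        exact setLIntegral_mono measurable_const hη
    _ = 2 ^ d * η := by
        rw [setLIntegral_const, krW_vol d h, ← hc]
        calc _ = (c⁻¹ * c) * (2 ^ d * η) := by ring
          _ = _ := by rw [ENNReal.inv_mul_cancel hc0 hct, one_mul]

lemma kr_backward {d : ℕ} (p : ℝ) (hp : 1 ≤ p)
    [Fact (1 ≤ ENNReal.ofReal p)]
    (F : Set (Lp ℝ (ENNReal.ofReal p) (volume : Measure (EuclideanSpace ℝ (Fin d)))))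
    (hb : Bornology.IsBounded F)
    (ht : ∀ ε > 0, ∃ R > 0, ∀ f ∈ F,
          (∫ x in {x : EuclideanSpace ℝ (Fin d) | R < ‖x‖},
            |(f : EuclideanSpace ℝ (Fin d) → ℝ) x| ^ p) < ε ^ p)
    (hs : ∀ ε > 0, ∃ δ > 0, ∀ f ∈ F, ∀ y : EuclideanSpace ℝ (Fin d), ‖y‖ < δ →
          (∫ x, |(f : EuclideanSpace ℝ (Fin d) → ℝ) (x + y) -
                 (f : EuclideanSpace ℝ (Fin d) → ℝ) x| ^ p) < ε ^ p) :
    TotallyBounded F := by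
  have hp0 : 0 < p := by linarith
  -- it is enough to approximate by totally bounded sets
  suffices H : ∀ ε > 0, ∃ G : Set (Lp ℝ (ENNReal.ofReal p)
      (volume : Measure (EuclideanSpace ℝ (Fin d)))), TotallyBounded G ∧
      ∀ f ∈ F, ∃ g ∈ G, dist f g < ε by
    rw [Metric.totallyBounded_iff]
    intro ε hε
    obtain ⟨G, hG, hFG⟩ := H (ε / 2) (by positivity)
    obtain ⟨t, htf, hGt⟩ := Metric.totallyBounded_iff.1 hG (ε / 2) (by positivity)
    refine ⟨t, htf, fun f hf => ?_⟩
    obtain ⟨g, hg, hfg⟩ := hFG f hf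
    obtain ⟨u, hu, hgu⟩ := Set.mem_iUnion₂.1 (hGt hg)
    refine Set.mem_iUnion₂.2 ⟨u, hu, ?_⟩
    rw [Metric.mem_ball] at *
    linarith [dist_triangle f g u]
  intro ε hε
  -- choice of parameters
  set η : ℝ := ε ^ p / (2 * (2 ^ d + 1)) with hηdef
  have hη : 0 < η := by positivity
  set e : ℝ := η ^ p⁻¹ with hedef
  have he : 0 < e := by positivity
  have hep : ENNReal.ofReal e ^ p = ENNReal.ofReal η := by
    rw [ENNReal.ofReal_rpow_of_pos he, hedef, Real.rpow_inv_rpow hη.le hp0.ne']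
  obtain ⟨R, hR, hRF⟩ := ht e he
  obtain ⟨δ, hδ, hδF⟩ := hs e he
  obtain ⟨h, hh, hhδ⟩ := krW_small d hδ
  have htail : ∀ f ∈ F, ∫⁻ x in {x : EuclideanSpace ℝ (Fin d) | R < ‖x‖}, ‖f x‖ₑ ^ p ≤
      ENNReal.ofReal η := by
    intro f hf
    have := hRF f hf
    rw [kr_int_lt_iff hp ((Lp.memLp f).restrict _) he] at this
    rw [← kr_pow hp, ← hep]
    gcongr
  have hmean : ∀ f ∈ F, ∫⁻ x, ‖f x - krMean h f (krCell h x)‖ₑ ^ p ≤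
      2 ^ d * ENNReal.ofReal η := by
    intro f hf
    refine krMean_core hp hh (Lp.stronglyMeasurable f) (Lp.memLp f) fun y hy => ?_
    have := hδF f hf y (hhδ y hy)
    have hmp : MeasurePreserving (fun x : EuclideanSpace ℝ (Fin d) => x + y) volume volume :=
      measurePreserving_add_right _ _
    rw [kr_int_lt_iff hp (g := fun x => f (x + y) - f x)
      (((Lp.memLp f).comp_measurePreserving hmp).sub (Lp.memLp f)) he] at this
    rw [← kr_pow hp (fun x => f (x + y) - f x), ← hep]
    gcongr
  -- uniform bound on means
  obtain ⟨M, hM⟩ : ∃ M : ℝ, ∀ f ∈ F, ∀ k, |krMean h f k| ≤ M := by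
    obtain ⟨B, hB⟩ := hb.exists_norm_le
    set C : ENNReal := ((ENNReal.ofReal h ^ d)⁻¹ * ENNReal.ofReal B ^ p) ^ p⁻¹ with hC
    have hCt : C ≠ ⊤ := by
      refine ENNReal.rpow_ne_top_of_nonneg (by positivity) (ENNReal.mul_ne_top ?_ ?_)
      · exact ENNReal.inv_ne_top.2 (pow_ne_zero _ (by simpa using hh))
      · exact ENNReal.rpow_ne_top_of_nonneg hp0.le ENNReal.ofReal_ne_top
    refine ⟨C.toReal, fun f hf k => ?_⟩
    have h1 := krMean_bound hp hh (Lp.stronglyMeasurable f) k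
    have h2 : eLpNorm f (ENNReal.ofReal p) volume ≤ ENNReal.ofReal B := by
      rw [← Lp.enorm_def, ← ofReal_norm]
      exact ENNReal.ofReal_le_ofReal (hB f hf)
    have h3 : ‖krMean h f k‖ₑ ≤ C := by
      rw [hC, ENNReal.le_rpow_inv_iff hp0]
      refine h1.trans ?_
      gcongr
    have := ENNReal.toReal_mono hCt h3
    simpa using this
  -- the finite dimensional approximation
  set K : Finset (Fin d → ℤ) := Finset.Icc (fun _ => ⌊-R / h⌋) (fun _ => ⌊R / h⌋) with hK
  have hKmem : ∀ x : EuclideanSpace ℝ (Fin d), ‖x‖ ≤ R → krCell h x ∈ K := by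
    intro x hx
    have hxi : ∀ i, -R ≤ x i ∧ x i ≤ R := fun i =>
      abs_le.1 ((PiLp.norm_apply_le x i).trans hx)
    rw [hK, Finset.mem_Icc]
    refine ⟨fun i => Int.floor_mono ?_, fun i => Int.floor_mono ?_⟩
    · have := (hxi i).1
      gcongr
    · have := (hxi i).2
      gcongr
  have hQ : ∀ k, MeasurableSet (krCell h ⁻¹' {k} : Set (EuclideanSpace ℝ (Fin d))) := fun k =>
    krCell_measurable h (measurableSet_singleton _)
  have hQt : ∀ k, volume (krCell h ⁻¹' {k} : Set (EuclideanSpace ℝ (Fin d))) ≠ ⊤ := fun k => by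
    rw [krCell_vol hh]; exact ENNReal.pow_ne_top ENNReal.ofReal_ne_top
  let Φ : ((Fin d → ℤ) → ℝ) → Lp ℝ (ENNReal.ofReal p)
      (volume : Measure (EuclideanSpace ℝ (Fin d))) := fun c =>
    ∑ k ∈ K, c k • indicatorConstLp (ENNReal.ofReal p) (hQ k) (hQt k) (1 : ℝ)
  have hΦc : Continuous Φ := by
    refine continuous_finsetSum _ fun k _ => ?_
    exact (continuous_apply k).smul continuous_const
  have hΦ : ∀ c, Φ c =ᵐ[volume] fun x => if krCell h x ∈ K then c (krCell h x) else 0 := by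
    intro c
    have h1 := Lp.coeFn_fun_finsetSum K fun k =>
      c k • indicatorConstLp (ENNReal.ofReal p) (hQ k) (hQt k) (1 : ℝ)
    have h2 : ∀ᵐ x ∂(volume : Measure (EuclideanSpace ℝ (Fin d))), ∀ k,
        (c k • indicatorConstLp (ENNReal.ofReal p) (hQ k) (hQt k) (1 : ℝ)) x =
          if krCell h x = k then c k else 0 := by
      rw [ae_all_iff]
      intro k
      filter_upwards [Lp.coeFn_smul (c k) (indicatorConstLp (ENNReal.ofReal p) (hQ k) (hQt k)
        (1 : ℝ)), indicatorConstLp_coeFn (p := ENNReal.ofReal p) (hs := hQ k) (hμs := hQt k)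
        (c := (1 : ℝ))] with x hx1 hx2
      rw [hx1, Pi.smul_apply, hx2]
      by_cases hk : krCell h x = k
      · rw [Set.indicator_of_mem (by exact hk), if_pos hk, smul_eq_mul, mul_one]
      · rw [Set.indicator_of_notMem (by exact hk), if_neg hk, smul_zero]
    filter_upwards [h1, h2] with x hx1 hx2
    simp only [Φ]
    rw [hx1]
    simp only [hx2]
    simp
  refine ⟨Φ '' (Set.pi Set.univ fun _ => Set.Icc (-M) M), ?_, fun f hf => ?_⟩
  · exact ((isCompact_univ_pi fun _ => isCompact_Icc).image hΦc).totallyBounded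
  refine ⟨_, ⟨krMean h f, fun k _ => abs_le.1 (hM f hf k), rfl⟩, ?_⟩
  rw [← ENNReal.ofReal_lt_ofReal_iff hε, ← edist_dist, Lp.edist_def,
    ← ENNReal.rpow_lt_rpow_iff hp0, kr_pow hp]
  have hRm : MeasurableSet {x : EuclideanSpace ℝ (Fin d) | R < ‖x‖} :=
    measurableSet_lt measurable_const measurable_norm
  have hfm : Measurable f := (Lp.stronglyMeasurable f).measurable
  calc ∫⁻ x, ‖(f - Φ (krMean h f) : EuclideanSpace ℝ (Fin d) → ℝ) x‖ₑ ^ p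
      ≤ ∫⁻ x, (‖f x - krMean h f (krCell h x)‖ₑ ^ p +
          Set.indicator {x : EuclideanSpace ℝ (Fin d) | R < ‖x‖} (fun x => ‖f x‖ₑ ^ p) x) := by
        refine lintegral_mono_ae ?_
        filter_upwards [hΦ (krMean h f)] with x hx
        rw [Pi.sub_apply, hx]
        split_ifs with hxK
        · exact le_self_add
        · have : x ∈ {x : EuclideanSpace ℝ (Fin d) | R < ‖x‖} := by
            by_contra hcon
            exact hxK (hKmem x (not_lt.1 hcon))
          rw [Set.indicator_of_mem this, sub_zero]
          exact le_add_self
    _ = (∫⁻ x, ‖f x - krMean h f (krCell h x)‖ₑ ^ p) +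
          ∫⁻ x in {x : EuclideanSpace ℝ (Fin d) | R < ‖x‖}, ‖f x‖ₑ ^ p := by
        rw [lintegral_add_right _ (Measurable.indicator (by fun_prop) hRm),
          lintegral_indicator hRm]
    _ ≤ 2 ^ d * ENNReal.ofReal η + ENNReal.ofReal η := add_le_add (hmean f hf) (htail f hf)
    _ = ENNReal.ofReal ((2 ^ d + 1) * η) := by
        rw [ENNReal.ofReal_mul (by positivity), ENNReal.ofReal_add (by positivity) (by positivity),
          ENNReal.ofReal_pow (by positivity)]
        simp [add_mul]
    _ < ENNReal.ofReal ε ^ p := by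
        rw [ENNReal.ofReal_rpow_of_pos hε, ENNReal.ofReal_lt_ofReal_iff (by positivity)]
        have : (2 ^ d + 1) * η = ε ^ p / 2 := by rw [hηdef]; field_simp
        rw [this]
        have : 0 < ε ^ p := by positivity
        linarith

end

/-- **Kolmogorov–Riesz theorem.** For `p ∈ [1,∞)`, a subset
`F ⊂ L^p(ℝ^d)` is totally bounded if and only if (i) `F` is bounded, (ii) the `p`-mass of
its elements outside large balls is uniformly small, and (iii) the `L^p` modulus of
continuity under translations is uniform over `F`. -/
theorem kolmogorov_riesz {d : ℕ} (p : ℝ) (hp : 1 ≤ p)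
    [Fact (1 ≤ ENNReal.ofReal p)]
    (F : Set (Lp ℝ (ENNReal.ofReal p) (volume : Measure (EuclideanSpace ℝ (Fin d))))) :
    TotallyBounded F ↔
      (Bornology.IsBounded F ∧
       (∀ ε > 0, ∃ R > 0, ∀ f ∈ F,
          (∫ x in {x : EuclideanSpace ℝ (Fin d) | R < ‖x‖},
            |(f : EuclideanSpace ℝ (Fin d) → ℝ) x| ^ p) < ε ^ p) ∧
       (∀ ε > 0, ∃ δ > 0, ∀ f ∈ F, ∀ y : EuclideanSpace ℝ (Fin d), ‖y‖ < δ →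
          (∫ x, |(f : EuclideanSpace ℝ (Fin d) → ℝ) (x + y) -
                 (f : EuclideanSpace ℝ (Fin d) → ℝ) x| ^ p) < ε ^ p)) := by
  exact ⟨fun h => kr_forward p hp F h, fun ⟨h1, h2, h3⟩ => kr_backward p hp F h1 h2 h3⟩
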